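/- arXiv:math/0311072 — 2 statements merged into one kernel-verified Lean document; each statement's English description precedes it below -/
import Mathlib

section
/- Let A be a unital C*-algebra whose irreducible representations all have dimension at most n₁ < ∞, with n₁ attained (there exists an irreducible representation of dimension n₁). Then P_A = P_{n₁}: the A-monotone functions on [0,∞) are exactly the matrix monotone functions of order n₁. -/
/-!
Both inclusions between `P_A` and `P_{n₁}` come from the way order and functional calculus pass
through unital `*`-homomorphisms.

*`P_A ⊆ P_{n₁}`.* An irreducible representation `π` on a finite-dimensional space is onto (Schur's
lemma and the Jacobson density theorem, `irreducible_surjective`). Positive elements have the form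
`t⋆ t`, so they lift along a surjection to positive elements; a pair `0 ≤ x ≤ y` of matrices
therefore lifts to a pair `0 ≤ a ≤ a + c` in `A`, and applying `π` to `f(a) ≤ f(a + c)` gives
`f(x) ≤ f(y)` (`AMonotone.of_surjective`).

*`P_{n₁} ⊆ P_A`.* Let `0 ≤ x ≤ y` in `A` and suppose `z = f(y) - f(x)` is not positive. The states
of `A`, seen inside the product space `A → ℂ`, form a compact convex set. Hahn-Banach separation
gives a state that is negative at `z`, and Krein-Milman then gives a pure one
(`exists_pure_state_neg`). The GNS representation `π` of a pure state is irreducible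
(`irreducible_of_pure`): an invariant subspace which is neither `⊥` nor `⊤` would split the state
into two states, and purity would force the projection of the cyclic vector to be a multiple of
that vector. Hence `π` acts on a space `H` of dimension at most `n₁`, and there is a vector `ξ`
with `⟪ξ, π(z) ξ⟫ < 0`. Choose an isometry `V : H → ℂ^{n₁}`. The map
`(a, c) ↦ V π(a) V⋆ + c (1 - V V⋆)` is a unital `*`-homomorphism on `A × ℂ` (`compression`), so
matrix monotonicity at the images of `(x, 0) ≤ (y, 0)` shows `⟪ξ, π(z) ξ⟫ ≥ 0`
(`inner_nonneg_of_matrixMonotone`), a contradiction.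
-/

noncomputable section

/-- `f` is `A`-monotone: for self-adjoint `x ≤ y` with spectra in `[0,∞)`,
`f(x) ≤ f(y)` via the continuous functional calculus. -/
def AMonotone (A : Type) [CStarAlgebra A] [PartialOrder A] [StarOrderedRing A]
    (f : ℝ → ℝ) : Prop :=
  ∀ x y : A, IsSelfAdjoint x → IsSelfAdjoint y →
    spectrum ℝ x ⊆ Set.Ici (0:ℝ) → spectrum ℝ y ⊆ Set.Ici (0:ℝ) →
    x ≤ y → cfc f x ≤ cfc f y

/-- The C*-algebra of `n × n` complex matrices, realized as operators on
`n`-dimensional complex Hilbert space. -/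
abbrev MatAlg (n : ℕ) := EuclideanSpace ℂ (Fin n) →L[ℂ] EuclideanSpace ℂ (Fin n)

/-- `f` is matrix monotone of order `n`. -/
def MatrixMonotone (n : ℕ) (f : ℝ → ℝ) : Prop := AMonotone (MatAlg n) f

/-- A (unital) representation of `A` on a Hilbert space `H` is (topologically)
irreducible if the only closed invariant subspaces are trivial. -/
def IsIrreducibleRep {A : Type} [CStarAlgebra A] {H : Type} [NormedAddCommGroup H]
    [InnerProductSpace ℂ H] [CompleteSpace H] (π : A →⋆ₐ[ℂ] (H →L[ℂ] H)) : Prop :=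
  ∀ K : Submodule ℂ H, IsClosed (K : Set H) → (∀ a : A, ∀ x ∈ K, π a x ∈ K) → K = ⊥ ∨ K = ⊤

/-! ### Surjectivity of finite-dimensional irreducible representations -/

/-- Burnside's theorem: a finite-dimensional irreducible representation is onto. By Schur's lemma
the commutant is `ℂ`, so every operator commutes with it, and the density theorem applies. -/
theorem irreducible_surjective {A : Type} [CStarAlgebra A] {n : ℕ} (hn : 0 < n)
    (π : A →⋆ₐ[ℂ] MatAlg n) (hπ : IsIrreducibleRep π) : Function.Surjective π := by
  have : Nonempty (Fin n) := ⟨⟨0, hn⟩⟩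
  let E := EuclideanSpace ℂ (Fin n)
  let _ : Module A E := Module.compHom E (π : A →+* MatAlg n)
  have smul_def (a : A) (x : E) : a • x = π a x := rfl
  have : IsScalarTower ℂ A E := ⟨fun c a x => by simp [smul_def]⟩
  have : IsSimpleModule A E := by
    refine { exists_pair_ne := ⟨⊥, ⊤, bot_ne_top⟩, eq_bot_or_eq_top := fun K => ?_ }
    have := hπ (K.restrictScalars ℂ) (Submodule.closed_of_finiteDimensional _)
      fun a x hx => K.smul_mem a hx
    simpa using this
  -- An eigenspace of an intertwiner is a nonzero invariant subspace, hence everything.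
  have schur (T : Module.End A E) : ∃ c : ℂ, ∀ x, T x = c • x := by
    obtain ⟨c, hc⟩ := Module.End.exists_eigenvalue (T.restrictScalars ℂ : Module.End ℂ E)
    refine ⟨c, fun x => ?_⟩
    have h := hπ (Module.End.eigenspace (T.restrictScalars ℂ : Module.End ℂ E) c)
      (Submodule.closed_of_finiteDimensional _) fun a x hx => by
        rw [Module.End.mem_eigenspace_iff] at hx ⊢
        change T (a • x) = c • π a x
        rw [map_smul, ← map_smul (π a), smul_def]
        exact congrArg (π a) hx
    have htop := h.resolve_left hc
    have : x ∈ Module.End.eigenspace (T.restrictScalars ℂ : Module.End ℂ E) c := by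
      rw [htop]; trivial
    exact Module.End.mem_eigenspace_iff.mp this
  intro S
  let F : Module.End (Module.End A E) E :=
    { toFun := S
      map_add' := map_add S
      map_smul' := fun T x => by
        obtain ⟨c, hc⟩ := schur T
        change S (T x) = T (S x)
        rw [hc, hc, map_smul] }
  obtain ⟨r, hr⟩ := jacobson_density (R := A) F
    (Finset.univ.image (EuclideanSpace.basisFun (Fin n) ℂ))
  refine ⟨r, ?_⟩
  apply ContinuousLinearMap.coe_injective
  refine (EuclideanSpace.basisFun (Fin n) ℂ).toBasis.ext fun i => ?_
  have := hr (EuclideanSpace.basisFun (Fin n) ℂ i) (Finset.mem_image_of_mem _ (Finset.mem_univ i))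
  exact this.symm

/-! ### Passing monotonicity to quotients -/

/-- A quotient `B` of `A` has `P_A ⊆ P_B`: comparable positive pairs in `B` lift to `A`. -/
theorem AMonotone.of_surjective {A B : Type} [CStarAlgebra A] [PartialOrder A] [StarOrderedRing A]
    [CStarAlgebra B] [PartialOrder B] [StarOrderedRing B] (π : A →⋆ₐ[ℂ] B)
    (hπ : Function.Surjective π) {f : ℝ → ℝ} (hf : ContinuousOn f (Set.Ici (0:ℝ)))
    (hA : AMonotone A f) : AMonotone B f := by
  have lift (x : B) (hx : 0 ≤ x) : ∃ a : A, 0 ≤ a ∧ π a = x := by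
    obtain ⟨s, rfl⟩ := CStarAlgebra.nonneg_iff_eq_star_mul_self.mp hx
    obtain ⟨t, rfl⟩ := hπ s
    exact ⟨star t * t, star_mul_self_nonneg t, by rw [map_mul, map_star]⟩
  have spec {a : A} (ha : 0 ≤ a) : spectrum ℝ a ⊆ Set.Ici 0 := fun r hr =>
    spectrum_nonneg_of_nonneg ha hr
  have hcont : Continuous π := map_continuous π
  intro x y hx hy hxs hys hxy
  have hx0 : 0 ≤ x := (StarOrderedRing.nonneg_iff_spectrum_nonneg x hx).mpr hxs
  obtain ⟨a, ha, rfl⟩ := lift x hx0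
  obtain ⟨c, hc, hcy⟩ := lift _ (sub_nonneg.mpr hxy)
  obtain rfl : y = π (a + c) := by rw [map_add, hcy]; abel
  have hac : 0 ≤ a + c := add_nonneg ha hc
  rw [← StarAlgHom.map_cfc π f a (hf.mono (spec ha)) hcont ha.isSelfAdjoint hx,
    ← StarAlgHom.map_cfc π f (a + c) (hf.mono (spec hac)) hcont hac.isSelfAdjoint hy]
  exact OrderHomClass.mono π (hA _ _ ha.isSelfAdjoint hac.isSelfAdjoint (spec ha) (spec hac)
    (le_add_of_nonneg_right hc))

/-! ### Embedding a representation into a larger matrix algebra -/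

open ContinuousLinearMap in
/-- For a representation `π` on `H` and an isometry `V : H → E`, the unital `*`-homomorphism
`(a, c) ↦ V π(a) V⋆ + c (1 - V V⋆)` from `A × ℂ` to operators on `E`. The extra factor `ℂ` acts on
the orthogonal complement of the range of `V` and is what makes the map unital. -/
def compression {A H E : Type} [CStarAlgebra A]
    [NormedAddCommGroup H] [InnerProductSpace ℂ H] [CompleteSpace H]
    [NormedAddCommGroup E] [InnerProductSpace ℂ E] [CompleteSpace E]
    (π : A →⋆ₐ[ℂ] (H →L[ℂ] H)) (V : H →L[ℂ] E) (hV : adjoint V ∘L V = 1) :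
    (A × ℂ) →⋆ₐ[ℂ] (E →L[ℂ] E) :=
  have hV' (x : H) : adjoint V (V x) = x := congrArg (· x) hV
  { toFun := fun p => V ∘L π p.1 ∘L adjoint V + p.2 • (1 - V ∘L adjoint V)
    map_one' := by ext x; simp
    map_mul' := fun p q => by
      ext x
      simp [hV', smul_smul]
    map_zero' := by ext x; simp
    map_add' := fun p q => by
      ext x
      simp [add_smul]
      abel
    commutes' := fun r => by
      ext x
      simp [Algebra.algebraMap_eq_smul_one, smul_sub]
    map_star' := fun p => by
      simp [star_eq_adjoint, adjoint_comp, comp_assoc, map_star] }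

theorem exists_isometry {H : Type} [NormedAddCommGroup H] [InnerProductSpace ℂ H]
    [CompleteSpace H] {n : ℕ} (h : Module.rank ℂ H ≤ n) :
    ∃ V : H →L[ℂ] EuclideanSpace ℂ (Fin n), ContinuousLinearMap.adjoint V ∘L V = 1 := by
  have : FiniteDimensional ℂ H :=
    Module.rank_lt_aleph0_iff.mp (h.trans_lt (Cardinal.natCast_lt_aleph0))
  have hle : Module.finrank ℂ H ≤ n := Module.finrank_le_of_rank_le h
  let b := stdOrthonormalBasis ℂ H
  let e := EuclideanSpace.basisFun (Fin n) ℂ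
  let L : H →ₗ[ℂ] EuclideanSpace ℂ (Fin n) := b.toBasis.constr ℂ (e ∘ Fin.castLE hle)
  let V : H →ₗᵢ[ℂ] EuclideanSpace ℂ (Fin n) := L.isometryOfOrthonormal (v := b.toBasis)
    (by simp [b.orthonormal]) (by
      have : (L ∘ b.toBasis) = e ∘ Fin.castLE hle := by
        ext1 i; exact Module.Basis.constr_basis ..
      rw [this]
      exact e.orthonormal.comp _ (Fin.castLE_injective hle))
  exact ⟨V.toContinuousLinearMap, V.adjoint_comp_self⟩

/-! ### States and pure states -/

open scoped ComplexOrder ComplexStarModule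

/-- The states of `A`: positive complex-linear functionals with value `1` at `1`. They are encoded
as plain functions, so that the product topology on `A → ℂ` is the weak-* topology and compactness
comes from Tychonoff's theorem. -/
def stateSet (A : Type) [CStarAlgebra A] [PartialOrder A] : Set (A → ℂ) :=
  {g | (∀ a b, g (a + b) = g a + g b) ∧ (∀ (c : ℂ) a, g (c • a) = c * g a) ∧
    (∀ a, 0 ≤ a → 0 ≤ g a) ∧ g 1 = 1}

section States

variable {A : Type} [CStarAlgebra A] [PartialOrder A]

theorem isClosed_stateSet : IsClosed (stateSet A) := by
  have h : stateSet A = (⋂ (a : A) (b : A), {g | g (a + b) = g a + g b}) ∩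
      ((⋂ (c : ℂ) (a : A), {g | g (c • a) = c * g a}) ∩
      ((⋂ (a : A) (_ : 0 ≤ a), {g | 0 ≤ g a}) ∩ {g | g 1 = 1})) := by
    ext g; simp [stateSet]
  rw [h]
  refine IsClosed.inter ?_ (IsClosed.inter ?_ (IsClosed.inter ?_ ?_))
  · exact isClosed_iInter fun a => isClosed_iInter fun b => isClosed_eq (by fun_prop) (by fun_prop)
  · exact isClosed_iInter fun a => isClosed_iInter fun b => isClosed_eq (by fun_prop) (by fun_prop)
  · exact isClosed_iInter fun a => isClosed_iInter fun _ => isClosed_le (by fun_prop) (by fun_prop)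
  · exact isClosed_eq (by fun_prop) (by fun_prop)

theorem convex_stateSet : Convex ℝ (stateSet A) := by
  rintro g ⟨g1, g2, g3, g4⟩ h ⟨h1, h2, h3, h4⟩ s t hs ht hst
  have hst' : (s : ℂ) + t = 1 := by exact_mod_cast hst
  refine ⟨fun a b => ?_, fun c a => ?_, fun a ha => ?_, ?_⟩
  · simp [g1, h1]; ring
  · simp [g2, h2]; ring
  · have hs' : (0 : ℂ) ≤ s := by exact_mod_cast hs
    have ht' : (0 : ℂ) ≤ t := by exact_mod_cast ht
    simpa using add_nonneg (mul_nonneg hs' (g3 a ha)) (mul_nonneg ht' (h3 a ha))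
  · simpa [g4, h4] using hst'

variable [StarOrderedRing A]

/-- A state as a bundled positive linear map, the input of the GNS construction. -/
def stateSet.toPositive {g : A → ℂ} (hg : g ∈ stateSet A) : A →ₚ[ℂ] ℂ :=
  PositiveLinearMap.mk₀ { toFun := g, map_add' := hg.1, map_smul' := hg.2.1 } hg.2.2.1

/-- A bound uniform over all states; the sharp constant is `1`, but compactness needs no more than
some constant, and `4` comes for free from writing `a` as a combination of four positive elements.
-/
theorem stateSet.norm_le {g : A → ℂ} (hg : g ∈ stateSet A) (a : A) : ‖g a‖ ≤ 4 * ‖a‖ := by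
  obtain ⟨y, hy0, hyn, hy⟩ := CStarAlgebra.exists_sum_four_nonneg a
  have key (i : Fin 4) : ‖g (y i)‖ ≤ ‖a‖ := by
    refine ((stateSet.toPositive hg).norm_apply_le_of_nonneg (y i) (hy0 i)).trans ?_
    have : (stateSet.toPositive hg) 1 = 1 := hg.2.2.2
    simpa [this] using hyn i
  have hsum : g a = ∑ i : Fin 4, Complex.I ^ (i : ℕ) * g (y i) := by
    change (stateSet.toPositive hg) a = ∑ i : Fin 4, Complex.I ^ (i : ℕ) * (stateSet.toPositive hg) (y i)
    conv_lhs => rw [hy]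
    simp only [map_sum, map_smul, smul_eq_mul]
  rw [hsum]
  refine (norm_sum_le _ _).trans ?_
  refine (Finset.sum_le_sum (g := fun _ => ‖a‖) fun i _ => ?_).trans (by simp)
  simpa using key i

theorem isCompact_stateSet : IsCompact (stateSet A) := by
  refine (isCompact_univ_pi fun a : A => isCompact_closedBall (0 : ℂ) (4 * ‖a‖)).of_isClosed_subset
    isClosed_stateSet fun g hg a _ => ?_
  simpa using stateSet.norm_le hg a

theorem exists_state_neg {z : A} (hz : IsSelfAdjoint z) (hneg : ¬ 0 ≤ z) :
    ∃ g ∈ stateSet A, (g z).re < 0 := by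
  -- Separate `z` from the closed convex cone of nonnegative elements.
  have hconv : Convex ℝ {a : A | 0 ≤ a} := fun a ha b hb s t hs ht _ =>
    add_nonneg (smul_nonneg hs ha) (smul_nonneg ht hb)
  obtain ⟨F, u, hFz, hF⟩ := geometric_hahn_banach_point_closed hconv
    CStarAlgebra.isClosed_nonneg (x := z) hneg
  have hu : u < 0 := by simpa using hF 0 le_rfl
  have hFnn (a : A) (ha : 0 ≤ a) : 0 ≤ F a := by
    by_contra! hlt
    have := hF ((u / F a) • a) (smul_nonneg (div_nonneg_of_nonpos hu.le hlt.le) ha)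
    rw [map_smul, smul_eq_mul, div_mul_cancel₀ _ hlt.ne] at this
    exact lt_irrefl _ this
  -- `‖z‖ + z ≥ 0` and `F z < 0`, so `F 1` cannot be nonpositive.
  have hF1 : 0 < F 1 := by
    have h1 : 0 ≤ algebraMap ℝ A ‖z‖ + z := by
      have := hz.neg_algebraMap_norm_le_self
      simpa [neg_le_iff_add_nonneg'] using this
    have h2 := hFnn _ h1
    rw [map_add, Algebra.algebraMap_eq_smul_one, map_smul, smul_eq_mul] at h2
    by_contra! h3
    nlinarith [norm_nonneg z]
  -- Complexify `F` restricted to the self-adjoint part, and normalize.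
  let g : A → ℂ := fun a => ((F 1)⁻¹ : ℝ) * ((F (ℜ a : A) : ℂ) + Complex.I * F (ℑ a : A))
  refine ⟨g, ⟨fun a b => ?_, fun c a => ?_, fun a ha => ?_, ?_⟩, ?_⟩
  · simp [g]; ring
  · rw [← Complex.re_add_im c]
    simp only [g, realPart_smul, imaginaryPart_smul]
    simp [-Complex.re_add_im]
    ring_nf
    simp
    ring
  · have h1 : (ℜ a : A) = a := ha.isSelfAdjoint.coe_realPart
    have h2 : ℑ a = 0 := ha.isSelfAdjoint.imaginaryPart
    simp only [g, h1, h2]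
    have := mul_nonneg (inv_nonneg.mpr hF1.le) (hFnn a ha)
    simpa using (by exact_mod_cast this : (0 : ℂ) ≤ (((F 1)⁻¹ * F a : ℝ) : ℂ))
  · have h2 : ℑ (1 : A) = 0 := (IsSelfAdjoint.one A).imaginaryPart
    simp [g, h2, hF1.ne']
  · have h1 : (ℜ z : A) = z := hz.coe_realPart
    have h2 : ℑ z = 0 := hz.imaginaryPart
    have := mul_neg_of_pos_of_neg (inv_pos.mpr hF1) (hFz.trans hu)
    simpa [g, h1, h2] using this

/-- If all pure states were nonnegative at `z`, then by Krein-Milman all states would be. -/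
theorem exists_pure_state_neg {z : A} (hz : IsSelfAdjoint z) (hneg : ¬ 0 ≤ z) :
    ∃ g ∈ (stateSet A).extremePoints ℝ, (g z).re < 0 := by
  by_contra! hall
  obtain ⟨g, hg, hgz⟩ := exists_state_neg hz hneg
  have hclosed : IsClosed {h : A → ℂ | 0 ≤ (h z).re} :=
    isClosed_le continuous_const (Complex.continuous_re.comp (continuous_apply z))
  have hconv : Convex ℝ {h : A → ℂ | 0 ≤ (h z).re} := fun a ha b hb s t hs ht _ => by
    simpa using add_nonneg (mul_nonneg hs ha) (mul_nonneg ht hb)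
  have hsub : stateSet A ⊆ {h : A → ℂ | 0 ≤ (h z).re} := by
    rw [← closure_convexHull_extremePoints isCompact_stateSet convex_stateSet]
    exact closure_minimal (convexHull_min hall hconv) hclosed
  exact not_le.mpr hgz (hsub hg)

end States

/-! ### Pure states give irreducible GNS representations -/

section GNS

variable {A : Type} [CStarAlgebra A] [PartialOrder A] [StarOrderedRing A]

/-- The canonical cyclic vector of the GNS representation: the class of `1`. -/
def gnsCyclic (φ : A →ₚ[ℂ] ℂ) : φ.GNS := ((φ.toPreGNS 1 : φ.PreGNS) : φ.GNS)

theorem gns_apply_cyclic (φ : A →ₚ[ℂ] ℂ) (a : A) :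
    φ.gnsStarAlgHom a (gnsCyclic φ) = ((φ.toPreGNS a : φ.PreGNS) : φ.GNS) := by
  simp [gnsCyclic]

theorem gns_inner_cyclic (φ : A →ₚ[ℂ] ℂ) (a : A) :
    inner ℂ (gnsCyclic φ) (φ.gnsStarAlgHom a (gnsCyclic φ)) = φ a := by
  rw [gns_apply_cyclic, gnsCyclic, UniformSpace.Completion.inner_coe,
    PositiveLinearMap.preGNS_inner_def]
  simp

theorem gns_dense (φ : A →ₚ[ℂ] ℂ) :
    Dense (Set.range fun a => φ.gnsStarAlgHom a (gnsCyclic φ)) := by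
  simp only [gns_apply_cyclic]
  exact UniformSpace.Completion.denseRange_coe.comp φ.toPreGNS.surjective.denseRange
    (UniformSpace.Completion.continuous_coe _)

end GNS

section Irreducible

variable {A : Type} [CStarAlgebra A]
  {H : Type} [NormedAddCommGroup H] [InnerProductSpace ℂ H] [CompleteSpace H]
  (π : A →⋆ₐ[ℂ] (H →L[ℂ] H))

theorem rep_inner_left (a : A) (x y : H) : inner ℂ (π a x) y = inner ℂ x (π (star a) y) := by
  rw [map_star, ContinuousLinearMap.star_eq_adjoint, ContinuousLinearMap.adjoint_inner_right]

theorem orthogonal_invariant {K : Submodule ℂ H} (hK : ∀ a : A, ∀ x ∈ K, π a x ∈ K)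
    (a : A) (x : H) (hx : x ∈ Kᗮ) : π a x ∈ Kᗮ := by
  intro k hk
  have := hx _ (hK (star a) k hk)
  rwa [rep_inner_left, star_star] at this

theorem projection_comm {K : Submodule ℂ H} [K.HasOrthogonalProjection]
    (hK : ∀ a : A, ∀ x ∈ K, π a x ∈ K) (a : A) (x : H) :
    K.starProjection (π a x) = π a (K.starProjection x) := by
  apply Submodule.eq_starProjection_of_mem_orthogonal (hK a _ (K.starProjection_apply_mem x))
  rw [← map_sub]
  exact orthogonal_invariant π hK a _ (K.sub_starProjection_mem_orthogonal x)

/-- For an invariant subspace with projection `P` and `P ξ ≠ 0`, the functional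
`a ↦ ⟪P ξ, π(a) ξ⟫ / ‖P ξ‖²` is a state, because `P` commutes with `π`. -/
theorem compressed_state_mem [PartialOrder A] [StarOrderedRing A]
    {K : Submodule ℂ H} [K.HasOrthogonalProjection]
    (hK : ∀ a : A, ∀ x ∈ K, π a x ∈ K) (ξ : H) (hξ : K.starProjection ξ ≠ 0) :
    (fun a => ((‖K.starProjection ξ‖ ^ 2)⁻¹ : ℝ) *
      inner ℂ (K.starProjection ξ) (π a ξ)) ∈ stateSet A := by
  have hpos : 0 < ‖K.starProjection ξ‖ ^ 2 := by positivity
  have hself (x : H) : inner ℂ (K.starProjection x) x = ((‖K.starProjection x‖ ^ 2 : ℝ) : ℂ) := by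
    have h := K.inner_starProjection_left_eq_right (K.starProjection x) x
    rw [Submodule.starProjection_eq_self_iff.mpr (K.starProjection_apply_mem x),
      inner_self_eq_norm_sq_to_K] at h
    simpa using h
  refine ⟨fun a b => ?_, fun c a => ?_, fun a ha => ?_, ?_⟩
  · simp [mul_add]
  · simp; ring
  · obtain ⟨b, rfl⟩ := CStarAlgebra.nonneg_iff_eq_star_mul_self.mp ha
    have : inner ℂ (K.starProjection ξ) (π (star b * b) ξ)
        = ((‖K.starProjection (π b ξ)‖ ^ 2 : ℝ) : ℂ) := by
      rw [← hself, projection_comm π hK, rep_inner_left, map_mul]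
      rfl
    beta_reduce
    rw [this]
    exact_mod_cast (by positivity : 0 ≤ (‖K.starProjection ξ‖ ^ 2)⁻¹ *
      ‖K.starProjection (π b ξ)‖ ^ 2)
  · simp only [map_one, one_apply_eq_self, hself]
    exact_mod_cast inv_mul_cancel₀ hpos.ne'

theorem eq_bot_of_projection_eq_zero {K : Submodule ℂ H} [K.HasOrthogonalProjection]
    (hK : ∀ a : A, ∀ x ∈ K, π a x ∈ K) {ξ : H}
    (hξ : Dense (Set.range fun a => π a ξ)) (h0 : K.starProjection ξ = 0) : K = ⊥ := by
  have : ⇑K.starProjection = fun _ => 0 :=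
    Continuous.ext_on hξ K.starProjection.continuous continuous_const (by
      rintro _ ⟨a, rfl⟩
      simp [projection_comm π hK, h0])
  rw [eq_bot_iff]
  intro x hx
  rw [← Submodule.starProjection_eq_self_iff.mpr hx, this]
  simp

/-- A cyclic representation whose vector state is pure is irreducible. If `P` projects onto an
invariant subspace and neither `P ξ` nor `(1 - P) ξ` vanishes, the vector state is the convex
combination, with weights `‖P ξ‖²` and `‖(1 - P) ξ‖²`, of the two compressed states; purity makes
`P ξ` a multiple of `ξ`, contradicting that `P` is idempotent. -/
theorem irreducible_of_pure [PartialOrder A] [StarOrderedRing A] {ξ : H}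
    (hξ : Dense (Set.range fun a => π a ξ))
    (hpure : (fun a => inner ℂ ξ (π a ξ)) ∈ (stateSet A).extremePoints ℝ) :
    IsIrreducibleRep π := by
  intro K hKc hK
  have : CompleteSpace K := hKc.completeSpace_coe
  have hK' := orthogonal_invariant π hK
  by_cases h0 : K.starProjection ξ = 0
  · exact .inl (eq_bot_of_projection_eq_zero π hK hξ h0)
  by_cases h1 : Kᗮ.starProjection ξ = 0
  · exact .inr (by simpa using eq_bot_of_projection_eq_zero π hK' hξ h1)
  exfalso
  set t := ‖K.starProjection ξ‖ ^ 2 with ht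
  set s := ‖Kᗮ.starProjection ξ‖ ^ 2 with hs
  have htpos : 0 < t := by positivity
  have hspos : 0 < s := by positivity
  have hsum : K.starProjection ξ + Kᗮ.starProjection ξ = ξ :=
    Submodule.starProjection_add_starProjection_orthogonal ξ
  have hnorm : ‖ξ‖ ^ 2 = 1 := by
    have := hpure.1.2.2.2
    simp only [map_one, one_apply_eq_self, inner_self_eq_norm_sq_to_K,
      Complex.coe_algebraMap] at this
    exact_mod_cast this
  have hts : t + s = 1 := by
    rw [← hnorm, Submodule.norm_sq_eq_add_norm_sq_starProjection ξ K]
  have key := (mem_extremePoints.mp hpure).2 _ (compressed_state_mem π hK ξ h0)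
    _ (compressed_state_mem π hK' ξ h1) ⟨t, s, htpos, hspos, hts, by
      ext a
      have ht0 : (t : ℂ) ≠ 0 := by exact_mod_cast htpos.ne'
      have hs0 : (s : ℂ) ≠ 0 := by exact_mod_cast hspos.ne'
      simp only [Pi.add_apply, Pi.smul_apply, Complex.real_smul, ← ht, ← hs, Complex.ofReal_inv]
      rw [mul_inv_cancel_left₀ ht0, mul_inv_cancel_left₀ hs0, ← inner_add_left, hsum]⟩
  -- The projected cyclic vector is a scalar multiple of the cyclic vector.
  have hP : K.starProjection ξ = (t : ℂ) • ξ := by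
    have hfun : (fun y => inner ℂ (K.starProjection ξ) y) = fun y => inner ℂ ((t : ℂ) • ξ) y :=
      Continuous.ext_on hξ (by fun_prop) (by fun_prop) (by
        rintro _ ⟨a, rfl⟩
        have h := congrFun key.1 a
        have ht0 : (t : ℂ) ≠ 0 := by exact_mod_cast htpos.ne'
        simp only [← ht, Complex.ofReal_inv] at h
        rw [inv_mul_eq_iff_eq_mul₀ ht0] at h
        simp [h])
    exact ext_inner_right ℂ (congrFun hfun)
  -- Taking squared norms, `t = t ^ 2`, while `0 < t < 1`.
  have hn : t = t ^ 2 := by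
    have := congrArg (fun v => ‖v‖ ^ 2) hP
    simpa [norm_smul, mul_pow, hnorm, ← ht] using this
  nlinarith

end Irreducible

/-! ### Testing positivity in irreducible representations -/

/-- Irreducible representations detect positivity of self-adjoint elements. -/
theorem exists_irreducible_neg {A : Type} [CStarAlgebra A] [PartialOrder A] [StarOrderedRing A]
    {z : A} (hz : IsSelfAdjoint z) (hneg : ¬ 0 ≤ z) :
    ∃ (H : Type) (_ : NormedAddCommGroup H) (_ : InnerProductSpace ℂ H) (_ : CompleteSpace H)
      (π : A →⋆ₐ[ℂ] (H →L[ℂ] H)), IsIrreducibleRep π ∧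
        ∃ ξ : H, (inner ℂ ξ (π z ξ)).re < 0 := by
  obtain ⟨g, hg, hgz⟩ := exists_pure_state_neg hz hneg
  let φ := stateSet.toPositive hg.1
  have hφ : (fun a => inner ℂ (gnsCyclic φ) (φ.gnsStarAlgHom a (gnsCyclic φ))) = g :=
    funext fun a => gns_inner_cyclic φ a
  refine ⟨φ.GNS, inferInstance, inferInstance, inferInstance, φ.gnsStarAlgHom,
    irreducible_of_pure _ (gns_dense φ) (hφ ▸ hg), gnsCyclic φ, ?_⟩
  rwa [gns_inner_cyclic]

/-- The real functional calculus on `A × ℂ` for the product `ℝ`-algebra structure. Instance search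
misses it because it looks for the `ℝ`-algebra structure obtained by restricting scalars from `ℂ`;
the two structures agree definitionally. -/
theorem cfc_prod {A : Type} [CStarAlgebra A] :
    ContinuousFunctionalCalculus ℝ (A × ℂ) IsSelfAdjoint :=
  IsSelfAdjoint.instContinuousFunctionalCalculus (A := A × ℂ)

/-- In a representation of dimension at most `n`, the image of `f(y) - f(x)` is positive for every
`f` that is matrix monotone of order `n`. The difference is seen in `n × n` matrices through
`compression`, evaluated at vectors in the range of `V`. -/
theorem inner_nonneg_of_matrixMonotone {A : Type} [CStarAlgebra A] [PartialOrder A]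
    [StarOrderedRing A] {n : ℕ} {f : ℝ → ℝ} (hf : ContinuousOn f (Set.Ici (0:ℝ)))
    (hmono : MatrixMonotone n f) {H : Type} [NormedAddCommGroup H] [InnerProductSpace ℂ H]
    [CompleteSpace H] (π : A →⋆ₐ[ℂ] (H →L[ℂ] H)) (hH : Module.rank ℂ H ≤ n)
    {x y : A} (hx : 0 ≤ x) (hxy : x ≤ y) (ξ : H) :
    0 ≤ (inner ℂ ξ (π (cfc f y - cfc f x) ξ)).re := by
  obtain ⟨V, hV⟩ := exists_isometry hH
  let Ψ := compression π V hV
  have hVV (v : H) : ContinuousLinearMap.adjoint V (V v) = v := congrArg (· v) hV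
  have hΨ (a : A) (c : ℂ) : inner ℂ (V ξ) (Ψ (a, c) (V ξ)) = inner ℂ ξ (π a ξ) := by
    change inner ℂ (V ξ) (V (π a (ContinuousLinearMap.adjoint V (V ξ)))
      + c • (V ξ - V (ContinuousLinearMap.adjoint V (V ξ)))) = _
    rw [hVV, sub_self, smul_zero, add_zero, ← ContinuousLinearMap.adjoint_inner_right, hVV]
  have hcont : Continuous Ψ := map_continuous Ψ
  have spec {B : Type} [CStarAlgebra B] [PartialOrder B] [StarOrderedRing B] {b : B}
      (hb : 0 ≤ b) : spectrum ℝ b ⊆ Set.Ici 0 := fun r hr => spectrum_nonneg_of_nonneg hb hr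
  have hpair {a : A} (ha : 0 ≤ a) : (0 : A × ℂ) ≤ (a, 0) := ⟨ha, le_rfl⟩
  have := cfc_prod (A := A)
  have hcfc {a : A} (ha : 0 ≤ a) : cfc f (Ψ (a, 0)) = Ψ (cfc f a, cfc f (0 : ℂ)) := by
    have hsp : spectrum ℝ (a, (0 : ℂ)) ⊆ Set.Ici 0 := by
      rw [Prod.spectrum_eq]
      exact Set.union_subset (spec ha) (spec le_rfl)
    have hsa : IsSelfAdjoint (a, (0 : ℂ)) := by
      ext <;> simp [ha.isSelfAdjoint.star_eq]
    rw [← StarAlgHom.map_cfc Ψ f (a, 0) (hf.mono hsp) hcont hsa (hsa.map Ψ)]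
    congr 1
    exact cfc_map_prod (S := ℂ) f a (0 : ℂ)
      (hf.mono (Set.union_subset (spec ha) (spec le_rfl))) hsa ha.isSelfAdjoint (.zero ℂ)
  have hy := hx.trans hxy
  have hle : Ψ (x, 0) ≤ Ψ (y, 0) := OrderHomClass.mono Ψ ⟨hxy, le_rfl⟩
  have h0x : 0 ≤ Ψ (x, 0) := map_nonneg Ψ (hpair hx)
  have h0y := h0x.trans hle
  have h := hmono _ _ h0x.isSelfAdjoint h0y.isSelfAdjoint (spec h0x) (spec h0y) hle
  rw [hcfc hx, hcfc hy, ← sub_nonneg, ← map_sub, Prod.mk_sub_mk, sub_self,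
    ContinuousLinearMap.nonneg_iff_isPositive] at h
  have := h.re_inner_nonneg_right (V ξ)
  rwa [hΨ] at this

/-- If all irreducible representations of `A` have dimension at most `n₁`, with `n₁`
attained, then `P_A = P_{n₁}`. -/
theorem stmt10 (A : Type) [CStarAlgebra A] [PartialOrder A] [StarOrderedRing A]
    (n₁ : ℕ) (hpos : 0 < n₁)
    (hdim : ∀ (H : Type) [NormedAddCommGroup H] [InnerProductSpace ℂ H] [CompleteSpace H]
      (π : A →⋆ₐ[ℂ] (H →L[ℂ] H)), IsIrreducibleRep π → Module.rank ℂ H ≤ n₁)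
    (hatt : ∃ π : A →⋆ₐ[ℂ] MatAlg n₁, IsIrreducibleRep π)
    (f : ℝ → ℝ) (hf : ContinuousOn f (Set.Ici (0:ℝ))) :
    AMonotone A f ↔ MatrixMonotone n₁ f := by

  constructor
  · obtain ⟨π, hπ⟩ := hatt
    exact AMonotone.of_surjective π (irreducible_surjective hpos π hπ) hf
  · intro hmono x y hx hy hxs hys hxy
    have hx0 : 0 ≤ x := (StarOrderedRing.nonneg_iff_spectrum_nonneg x hx).mpr hxs
    rw [← sub_nonneg]
    by_contra hneg
    obtain ⟨H, _, _, _, π, hπ, ξ, hξ⟩ :=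
      exists_irreducible_neg ((cfc_predicate f y).sub (cfc_predicate f x)) hneg
    exact hξ.not_ge (inner_nonneg_of_matrixMonotone hf hmono π (hdim H π hπ) hx0 hxy ξ)
end
end

section
/- Assume the gap theorem: for every n, there exists a continuous function on [0,∞) that is matrix monotone of order n but not of order n+1 (P_{n+1} ⊊ P_n). Then for any unital C*-algebra A and positive integer n, if P_n ⊆ P_A then every irreducible representation of A has dimension at most n. -/
/-!
The point is that an irreducible representation `π` of `A` on `H`, with `dim H > n`, forces every
continuous `A`-monotone function to be matrix monotone of order `n + 1`; the gap function for `n`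
then contradicts `P_n ⊆ P_A`. To transfer monotonicity, embed `E = ℂ^(n+1)` isometrically in `H` by
`V` and, for operators `0 ≤ x ≤ y` on `E`, look for `a k ≤ b k` in `A`, positive and bounded in
norm, such that `π (a k)` and `π (b k)` converge pointwise on `V E` to `x` and `y`. Polynomials,
hence (by Weierstrass) all continuous functions, respect such limits, so that
`cfc f (a k) ≤ cfc f (b k)` passes to `cfc f x ≤ cfc f y`. It suffices to approximate positive
operators: approximate `x` by `a k` and `y - x` by `d k`, and put `b k = a k + d k`.

The approximation is a finite-dimensional form of the Kaplansky density theorem.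
* Schur's lemma (`IsIrreducibleRep.schur`): the commutant of `π A` consists of scalars. A
  self-adjoint operator of the commutant with two spectral values would give, by functional
  calculus, two nonzero operators of the commutant with product zero, although their kernels are
  closed invariant subspaces.
* Density (`IsIrreducibleRep.sum_inner_eq_zero`): on a finite power of `H`, a projection commuting
  with the diagonal action of `π A` is a matrix of scalars, so it commutes with the diagonal action
  of every bounded operator.
* Self-adjoint approximants (`IsIrreducibleRep.exists_selfAdjoint_approx`): the adjoint is not
  strongly continuous, so Hahn–Banach separation is applied to the real subspace coming from the
  self-adjoint elements. The separating functional is symmetrized by doubling the number of vectors.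
* Norm control (`IsIrreducibleRep.exists_approx_nonneg`): the bounded function
  `t ↦ M * t ^ 2 / (1 + t ^ 2)` is strongly continuous on self-adjoint elements, by the resolvent
  identity, and every `x ≥ 0` with `‖x‖ < M` is in its range.
-/

noncomputable section

open scoped InnerProductSpace ComplexStarModule
open Filter Topology

/-! ### Schur's lemma and density for irreducible representations -/

section Irreducible

variable {A : Type} [CStarAlgebra A] {H : Type} [NormedAddCommGroup H]
    [InnerProductSpace ℂ H] [CompleteSpace H] {π : A →⋆ₐ[ℂ] (H →L[ℂ] H)}

/-- The kernel of an operator commuting with `π A` is a closed invariant subspace. -/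
theorem IsIrreducibleRep.eq_zero_or_injective (hπ : IsIrreducibleRep π) {T : H →L[ℂ] H}
    (hT : ∀ a, Commute (π a) T) : T = 0 ∨ ∀ v, T v = 0 → v = 0 := by
  rcases hπ T.ker T.isClosed_ker (fun a v hv => by
    have h := congrArg (fun S : H →L[ℂ] H => S v) (hT a).eq
    have hv' : T v = 0 := hv
    change T (π a v) = 0
    simpa [hv'] using h.symm) with h | h
  · right
    intro v hv
    have : v ∈ T.ker := hv
    rw [h] at this
    simpa using this
  · left
    ext v
    have : v ∈ T.ker := by rw [h]; trivial
    exact this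

theorem IsIrreducibleRep.schur_selfAdjoint (hπ : IsIrreducibleRep π) {T : H →L[ℂ] H}
    (hsa : IsSelfAdjoint T) (hT : ∀ a, Commute (π a) T) : ∃ c : ℂ, T = c • 1 := by
  have hsub : (spectrum ℝ T).Subsingleton := by
    intro s hs t ht
    by_contra hne
    wlog hst : s < t generalizing s t
    · exact this ht hs (Ne.symm hne) (lt_of_le_of_ne (not_lt.mp hst) (Ne.symm hne))
    obtain ⟨m, hsm, hmt⟩ := exists_between hst
    -- `g` and `h` have disjoint supports, one containing `s` and the other `t`.
    let g : ℝ → ℝ := fun x => max 0 (m - x)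
    let h : ℝ → ℝ := fun x => max 0 (x - m)
    have hg : Continuous g := by fun_prop
    have hh : Continuous h := by fun_prop
    have hgh : cfc g T * cfc h T = 0 := by
      rw [← cfc_mul g h T hg.continuousOn hh.continuousOn, ← cfc_const_zero ℝ T]
      refine cfc_congr fun x _ => ?_
      rcases le_total x m with hx | hx
      · simp [g, h, hx]
      · simp [g, h, hx]
    have hne0 : ∀ k : ℝ → ℝ, Continuous k → (∃ x ∈ spectrum ℝ T, k x ≠ 0) → cfc k T ≠ 0 := by
      rintro k hk ⟨x, hx, hkx⟩ h0
      rw [← cfc_const_zero ℝ T] at h0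
      exact hkx (eqOn_of_cfc_eq_cfc h0 hk.continuousOn continuousOn_const hsa hx)
    have hg0 := hne0 g hg ⟨s, hs, by simp [g, hsm]⟩
    have hh0 := hne0 h hh ⟨t, ht, by simp [h, hmt]⟩
    rcases hπ.eq_zero_or_injective (T := cfc g T)
      (fun a => ((hT a).symm.cfc_real g).symm) with h' | h'
    · exact hg0 h'
    · apply hh0
      ext v
      exact h' _ (congrArg (fun S : H →L[ℂ] H => S v) hgh)
  obtain h | ⟨r, h⟩ := hsub.eq_empty_or_singleton
  · refine ⟨0, ?_⟩
    rw [zero_smul]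
    exact CFC.eq_zero_of_spectrum_subset_zero (R := ℝ) T (by simp [h])
  · refine ⟨r, ?_⟩
    rw [CFC.eq_algebraMap_of_spectrum_subset_singleton T r h.subset]
    ext v
    simp [Algebra.algebraMap_eq_smul_one]

theorem IsIrreducibleRep.schur (hπ : IsIrreducibleRep π) {T : H →L[ℂ] H}
    (hT : ∀ a, Commute (π a) T) : ∃ c : ℂ, T = c • 1 := by
  have hT' : ∀ a, Commute (π a) (star T) := fun a => by
    have := (hT (star a)).star_star
    rwa [map_star, star_star] at this
  obtain ⟨c, hc⟩ := hπ.schur_selfAdjoint (T := (ℜ T : H →L[ℂ] H)) (ℜ T).2 fun a => by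
    rw [realPart_apply_coe]
    exact ((hT a).add_right (hT' a)).smul_right _
  obtain ⟨d, hd⟩ := hπ.schur_selfAdjoint (T := (ℑ T : H →L[ℂ] H)) (ℑ T).2 fun a => by
    rw [imaginaryPart_apply_coe]
    exact (((hT a).sub_right (hT' a)).smul_right _).smul_right _
  refine ⟨c + Complex.I * d, ?_⟩
  rw [← realPart_add_I_smul_imaginaryPart T, hc, hd, add_smul, mul_smul]

/-- Density in bicommutant form: a vector functional `∑ i, ⟪ξ i, T (w i)⟫` that vanishes on `π A`
vanishes on all bounded operators. -/
theorem IsIrreducibleRep.sum_inner_eq_zero (hπ : IsIrreducibleRep π) {ι : Type} [Fintype ι]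
    (w ξ : ι → H) (h : ∀ a, ∑ i, ⟪ξ i, π a (w i)⟫_ℂ = 0) (T : H →L[ℂ] H) :
    ∑ i, ⟪ξ i, T (w i)⟫_ℂ = 0 := by
  classical
  -- `D S` is the diagonal action of `S` on the Hilbert space `H ^ ι`.
  let D (S : H →L[ℂ] H) : PiLp 2 (fun _ : ι => H) →ₗ[ℂ] PiLp 2 (fun _ : ι => H) :=
    { toFun := fun x => WithLp.toLp 2 fun i => S (x i)
      map_add' := fun x y => by ext i; simp
      map_smul' := fun c x => by ext i; simp }
  have hDinner (a : A) (x y) : ⟪D (π a) x, y⟫_ℂ = ⟪x, D (π (star a)) y⟫_ℂ := by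
    simp [D, PiLp.inner_apply, map_star, ContinuousLinearMap.star_eq_adjoint,
      ContinuousLinearMap.adjoint_inner_right]
  let W : PiLp 2 (fun _ : ι => H) := WithLp.toLp 2 w
  let N : Set (PiLp 2 (fun _ : ι => H)) := Set.range fun a => D (π a) W
  let K := (Submodule.span ℂ N)ᗮ
  have : CompleteSpace K := (Submodule.isClosed_orthogonal _).completeSpace_coe
  have : K.HasOrthogonalProjection := Submodule.HasOrthogonalProjection.ofCompleteSpace K
  have hK (x) : x ∈ K ↔ ∀ a, ⟪D (π a) W, x⟫_ℂ = 0 := by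
    constructor
    · intro hx a
      exact Submodule.inner_right_of_mem_orthogonal (K := Submodule.span ℂ N)
        (Submodule.subset_span ⟨a, rfl⟩) hx
    · intro hx
      rw [Submodule.mem_orthogonal]
      intro u hu
      induction hu using Submodule.span_induction with
      | mem u hu => obtain ⟨a, rfl⟩ := hu; exact hx a
      | zero => simp
      | add u v _ _ hu hv => rw [inner_add_left, hu, hv, add_zero]
      | smul c u _ hu => rw [inner_smul_left, hu, mul_zero]
  have hDK (a) (x) (hx : x ∈ K) : D (π a) x ∈ K := by
    rw [hK] at hx ⊢
    intro b
    rw [← star_star a, ← hDinner]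
    have := hx (star a * b)
    simpa [D] using this
  have hDK' (a) (x) (hx : x ∈ Kᗮ) : D (π a) x ∈ Kᗮ := by
    rw [Submodule.mem_orthogonal] at hx ⊢
    intro u hu
    rw [← star_star a, ← hDinner]
    exact hx _ (hDK _ _ hu)
  let P := K.starProjection
  have hPD (a x) : P (D (π a) x) = D (π a) (P x) := by
    refine (Submodule.eq_starProjection_of_mem_orthogonal (hDK _ _ ?_) ?_)
    · exact Submodule.starProjection_apply_mem _ _
    · rw [← map_sub]
      exact hDK' _ _ (Submodule.sub_starProjection_mem_orthogonal _)
  let inj (j : ι) : H →L[ℂ] PiLp 2 (fun _ : ι => H) :=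
    (PiLp.continuousLinearEquiv 2 ℂ (fun _ : ι => H)).symm.toContinuousLinearMap ∘L
      ContinuousLinearMap.single ℂ (fun _ : ι => H) j
  have hinj (j : ι) (v : H) : inj j v = WithLp.toLp 2 (Pi.single j v) := rfl
  -- The matrix entries of `P` commute with `π A`, so they are scalars.
  let Q (i j : ι) : H →L[ℂ] H := PiLp.proj 2 (fun _ : ι => H) i ∘L P ∘L inj j
  have hQ (i j) : ∃ c : ℂ, Q i j = c • 1 := by
    refine hπ.schur fun a => ?_
    ext v
    have h1 : inj j (π a v) = D (π a) (inj j v) := by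
      ext k
      by_cases hk : k = j
      · subst hk; simp [hinj, D]
      · simp [hinj, D, hk]
    change π a ((P (inj j v)) i) = (P (inj j (π a v))) i
    rw [h1, hPD]
    rfl
  choose q hq using hQ
  have hP (x) (i) : P x i = ∑ j, q i j • x j := by
    have hx : x = ∑ j, inj j (x j) := by
      ext k
      simp [hinj, Finset.sum_apply, Pi.single_apply]
    calc P x i = PiLp.proj 2 (𝕜 := ℂ) (fun _ : ι => H) i (P (∑ j, inj j (x j))) := by
          rw [← hx]; rfl
      _ = ∑ j, Q i j (x j) := by rw [map_sum, map_sum]; rfl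
      _ = _ := by simp [hq]
  have hPDT (x) : P (D T x) = D T (P x) := by
    ext i
    rw [hP]
    simp [D, hP]
  -- `W` lies in the cyclic subspace generated by `W` because `π` is unital.
  have hPW : P W = 0 := by
    refine (Submodule.starProjection_apply_eq_zero_iff K).2 ?_
    refine Submodule.le_orthogonal_orthogonal _ (Submodule.subset_span ⟨1, ?_⟩)
    ext i; simp [D]
  have hΞ : WithLp.toLp 2 ξ ∈ K := by
    rw [hK]
    intro a
    rw [inner_eq_zero_symm, PiLp.inner_apply]
    exact h a
  have h0 : D T W ∈ Kᗮ := by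
    rw [← Submodule.starProjection_apply_eq_zero_iff]
    change P (D T W) = 0
    rw [hPDT, hPW, map_zero]
  have := Submodule.inner_right_of_mem_orthogonal hΞ h0
  simpa [PiLp.inner_apply, D, W] using this

/-- The self-adjoint elements of `π A` are strongly dense in the self-adjoint operators (with no
control of the norm). -/
theorem IsIrreducibleRep.exists_selfAdjoint_approx (hπ : IsIrreducibleRep π) {ι : Type}
    [Fintype ι] (w : ι → H) {T : H →L[ℂ] H} (hT : IsSelfAdjoint T) {ε : ℝ} (hε : 0 < ε) :
    ∃ a : A, IsSelfAdjoint a ∧ ∀ i, ‖π a (w i) - T (w i)‖ < ε := by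
  let L : selfAdjoint A →ₗ[ℝ] PiLp 2 (fun _ : ι => H) :=
    { toFun := fun a => WithLp.toLp 2 fun i => π a (w i)
      map_add' := fun x y => by ext i; simp
      map_smul' := fun c x => by
        ext i
        have : π (c • (x : A)) = c • π x := by
          rw [← Complex.coe_smul, map_smul, Complex.coe_smul]
        simp [this] }
  by_cases hmem : WithLp.toLp 2 (fun i => T (w i)) ∈ closure (L.range : Set _)
  · obtain ⟨_, ⟨a, rfl⟩, ha⟩ := Metric.mem_closure_iff.1 hmem ε hε
    refine ⟨a, a.2, fun i => lt_of_le_of_lt ?_ ha⟩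
    rw [dist_comm, dist_eq_norm]
    exact PiLp.norm_apply_le (L a - WithLp.toLp 2 (fun i => T (w i))) i
  exfalso
  obtain ⟨f, u, hu, hfu⟩ := RCLike.geometric_hahn_banach_closed_point (𝕜 := ℂ)
    L.range.convex.closure isClosed_closure hmem
  -- A functional bounded above on a real subspace has vanishing real part there.
  have hre (a : selfAdjoint A) : (f (L a)).re = 0 := by
    by_contra hne
    have h1 := hu (L ((u / (f (L a)).re) • a)) (subset_closure ⟨_, rfl⟩)
    rw [map_smul, ← Complex.coe_smul, map_smul] at h1
    simp [div_mul_cancel₀ _ hne] at h1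
  have hu0 : 0 < u := by simpa using hu (L 0) (subset_closure ⟨_, rfl⟩)
  obtain ⟨Ξ, rfl⟩ := (InnerProductSpace.toDual ℂ (PiLp 2 (fun _ : ι => H))).surjective f
  -- For self-adjoint `S`, twice the real part of the functional is again of the vector form, for
  -- the doubled families; unlike the real part, this form is complex linear in `S`.
  have hsym (S : H →L[ℂ] H) (hS : IsSelfAdjoint S) :
      ∑ i, ⟪Sum.elim Ξ w i, S (Sum.elim w Ξ i)⟫_ℂ
        = 2 * (⟪Ξ, WithLp.toLp 2 fun i => S (w i)⟫_ℂ).re := by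
    rw [Fintype.sum_sum_type, ← Complex.ofReal_ofNat, ← Complex.ofReal_mul, ← Complex.add_conj]
    simp only [Sum.elim_inl, Sum.elim_inr, PiLp.inner_apply, map_sum, inner_conj_symm]
    congr 1
    refine Finset.sum_congr rfl fun i _ => ?_
    exact (hS.isSymmetric _ _).symm
  have hzero (a : A) : ∑ i, ⟪Sum.elim Ξ w i, π a (Sum.elim w Ξ i)⟫_ℂ = 0 := by
    have hs (b : selfAdjoint A) : ∑ i, ⟪Sum.elim Ξ w i, π b (Sum.elim w Ξ i)⟫_ℂ = 0 := by
      rw [hsym _ (b.2.map π)]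
      have := hre b
      simp only [InnerProductSpace.toDual_apply_apply] at this
      change (⟪Ξ, WithLp.toLp 2 fun i => π b (w i)⟫_ℂ).re = 0 at this
      simp [this]
    rw [← realPart_add_I_smul_imaginaryPart a]
    simp only [map_add, map_smul, add_apply, smul_apply,
      inner_add_right, inner_smul_right, Finset.sum_add_distrib, ← Finset.mul_sum, hs]
    simp
  have := hπ.sum_inner_eq_zero _ _ hzero T
  rw [hsym T hT] at this
  simp only [InnerProductSpace.toDual_apply_apply] at hfu
  have h2 : (⟪Ξ, WithLp.toLp 2 fun i => T (w i)⟫_ℂ).re = 0 := by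
    have := congrArg Complex.re this
    simpa using this
  have h3 : u < (⟪Ξ, WithLp.toLp 2 fun i => T (w i)⟫_ℂ).re := hfu
  linarith

end Irreducible

/-! ### Bounded positive approximants and functional calculus -/

section Approx

variable {A : Type} [CStarAlgebra A] {H : Type} [NormedAddCommGroup H]
    [InnerProductSpace ℂ H] [CompleteSpace H] {π : A →⋆ₐ[ℂ] (H →L[ℂ] H)}
    {E : Type} [NormedAddCommGroup E] [InnerProductSpace ℂ E]
    {V : E →ₗᵢ[ℂ] H}

/-- `Approx π V a x`: identifying `E` with its image in `H` under the isometry `V`, the operators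
`π (a k)` converge pointwise on `E` to the operator `x` of `E`. -/
def Approx (π : A →⋆ₐ[ℂ] (H →L[ℂ] H)) (V : E →ₗᵢ[ℂ] H) (a : ℕ → A) (x : E →L[ℂ] E) : Prop :=
  ∀ e, Tendsto (fun k => π (a k) (V e)) atTop (𝓝 (V (x e)))


theorem map_real_smul_of_starAlgHom (r : ℝ) (a : A) : π (r • a) = r • π a := by
  rw [← Complex.coe_smul, map_smul, Complex.coe_smul]

theorem tendsto_zero_of_bounded {a : ℕ → A} {C : ℝ} (ha : ∀ k, ‖a k‖ ≤ C) {u : ℕ → H}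
    (hu : Tendsto u atTop (𝓝 0)) : Tendsto (fun k => π (a k) (u k)) atTop (𝓝 0) := by
  refine squeeze_zero_norm (a := fun k => C * ‖u k‖) (fun k => ?_)
    (by simpa using hu.norm.const_mul C)
  refine (ContinuousLinearMap.le_opNorm _ _).trans ?_
  gcongr
  exact (NonUnitalStarAlgHom.norm_apply_le π _).trans (ha k)

theorem Approx.mul {a b : ℕ → A} {x y : E →L[ℂ] E} (ha : Approx π V a x) (hb : Approx π V b y)
    {C : ℝ} (hC : ∀ k, ‖a k‖ ≤ C) : Approx π V (a * b) (x * y) := by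
  intro e
  have h1 : Tendsto (fun k => π (b k) (V e) - V (y e)) atTop (𝓝 0) := by
    simpa using (hb e).sub_const (V (y e))
  have := (tendsto_zero_of_bounded (π := π) hC h1).add (ha (y e))
  simpa using this

theorem Approx.add {a b : ℕ → A} {x y : E →L[ℂ] E} (ha : Approx π V a x)
    (hb : Approx π V b y) : Approx π V (a + b) (x + y) := by
  intro e
  simpa using (ha e).add (hb e)

theorem Approx.one : Approx π V 1 1 := by
  intro e
  simp

theorem Approx.real_smul {a : ℕ → A} {x : E →L[ℂ] E} (ha : Approx π V a x) (r : ℝ) :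
    Approx π V (r • a) (r • x) := by
  intro e
  have hV : V (r • x e) = r • V (x e) := by
    rw [← Complex.coe_smul, map_smul, Complex.coe_smul]
  simpa [map_real_smul_of_starAlgHom, hV] using (ha e).const_smul r

theorem Approx.pow {a : ℕ → A} {x : E →L[ℂ] E} (ha : Approx π V a x)
    {C : ℝ} (hC : ∀ k, ‖a k‖ ≤ C) (n : ℕ) : Approx π V (a ^ n) (x ^ n) := by
  induction n with
  | zero => simpa using Approx.one
  | succ n ih => rw [pow_succ', pow_succ']; exact ha.mul ih hC

theorem Approx.aeval {a : ℕ → A} {x : E →L[ℂ] E} (ha : Approx π V a x)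
    {C : ℝ} (hC : ∀ k, ‖a k‖ ≤ C) (p : Polynomial ℝ) :
    Approx π V (fun k => Polynomial.aeval (a k) p) (Polynomial.aeval x p) := by
  induction p using Polynomial.induction_on' with
  | add p q hp hq => simpa using! hp.add hq
  | monomial n r =>
    simpa [Polynomial.aeval_monomial, Algebra.algebraMap_eq_smul_one] using!
      (ha.pow hC n).real_smul r

variable [FiniteDimensional ℂ E]

theorem IsIrreducibleRep.exists_approx_selfAdjoint (hπ : IsIrreducibleRep π) (V : E →ₗᵢ[ℂ] H)
    {x : E →L[ℂ] E} (hx : IsSelfAdjoint x) :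
    ∃ a : ℕ → A, (∀ k, IsSelfAdjoint (a k)) ∧ Approx π V a x := by
  have : CompleteSpace E := FiniteDimensional.complete ℂ E
  let W : E →L[ℂ] H := V.toContinuousLinearMap
  let T : H →L[ℂ] H := W ∘L x ∘L ContinuousLinearMap.adjoint W
  have hT : IsSelfAdjoint T := by
    rw [ContinuousLinearMap.isSelfAdjoint_iff'] at hx ⊢
    simp only [T, ContinuousLinearMap.adjoint_comp, ContinuousLinearMap.adjoint_adjoint, hx]
    rfl
  have hWW (e : E) : ContinuousLinearMap.adjoint W (V e) = e := by
    refine ext_inner_left ℂ fun e' => ?_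
    rw [ContinuousLinearMap.adjoint_inner_right]
    exact V.inner_map_map _ _
  let B := stdOrthonormalBasis ℂ E
  choose a hsa ha using fun k : ℕ => hπ.exists_selfAdjoint_approx (fun i => V (B i)) hT
    (ε := 1 / ((k : ℝ) + 1)) (by positivity)
  refine ⟨a, hsa, fun e => ?_⟩
  have hB (i) : Tendsto (fun k => π (a k) (V (B i))) atTop (𝓝 (V (x (B i)))) := by
    rw [tendsto_iff_norm_sub_tendsto_zero]
    refine squeeze_zero (fun _ => norm_nonneg _) (fun k => ?_)
      tendsto_one_div_add_atTop_nhds_zero_nat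
    have := (ha k i).le
    simpa [T, hWW, W] using this
  rw [← B.sum_repr e]
  simp only [map_sum, map_smul]
  exact tendsto_finsetSum _ fun i _ => (hB i).const_smul _

theorem mem_Icc_of_mem_spectrum {B : Type} [CStarAlgebra B] [PartialOrder B] [StarOrderedRing B]
    {x : B} (hx : 0 ≤ x) {t : ℝ} (ht : t ∈ spectrum ℝ x) : t ∈ Set.Icc 0 ‖x‖ := by
  refine ⟨spectrum_nonneg_of_nonneg hx ht, ?_⟩
  have := norm_apply_le_norm_cfc (fun t : ℝ => t) x ht
  rw [cfc_id' ℝ x] at this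
  exact (le_abs_self t).trans this

variable [PartialOrder A] [StarOrderedRing A]

/-- Every positive operator on `E` is the limit of a norm-bounded sequence of positive elements
of `A`. -/
theorem IsIrreducibleRep.exists_approx_nonneg (hπ : IsIrreducibleRep π) (V : E →ₗᵢ[ℂ] H)
    {x : E →L[ℂ] E} (hx : 0 ≤ x) :
    ∃ (a : ℕ → A) (C : ℝ), (∀ k, 0 ≤ a k) ∧ (∀ k, ‖a k‖ ≤ C) ∧ Approx π V a x := by
  have : CompleteSpace E := FiniteDimensional.complete ℂ E
  let M : ℝ := ‖x‖ + 1
  have hM : 0 < M := by positivity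
  have hspec {t : ℝ} (ht : t ∈ spectrum ℝ x) : 0 ≤ t ∧ 0 < M - t := by
    have := mem_Icc_of_mem_spectrum hx ht
    exact ⟨this.1, by have := this.2; simp only [M]; linarith⟩
  -- `h` is the inverse of `t ↦ M * t ^ 2 / (1 + t ^ 2)` on `[0, M)`.
  let h : ℝ → ℝ := fun t => √(t / (M - t))
  have hh : ContinuousOn h (spectrum ℝ x) :=
    (continuousOn_id.div (by fun_prop) fun t ht => (hspec ht).2.ne').sqrt
  let z := cfc h x
  have hz : z * z * (algebraMap ℝ _ M - x) = x := by
    have h1 : algebraMap ℝ _ M - x = cfc (fun t : ℝ => M - t) x := by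
      rw [cfc_sub (fun _ => M) (fun t => t) x, cfc_const M x, cfc_id' ℝ x]
    have hc : ContinuousOn (fun t : ℝ => M - t) (spectrum ℝ x) := by fun_prop
    rw [h1, ← cfc_mul h h x hh hh, ← cfc_mul (fun t => h t * h t) _ x (hh.mul hh) hc]
    conv_rhs => rw [← cfc_id' ℝ x]
    refine cfc_congr fun t ht => ?_
    obtain ⟨h0, h2⟩ := hspec ht
    simp only [h, Real.mul_self_sqrt (div_nonneg h0 h2.le)]
    field_simp
  obtain ⟨a, hsa, ha⟩ := hπ.exists_approx_selfAdjoint V (x := z) (cfc_predicate h x)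
  have hpos (t : ℝ) : 0 < 1 + t ^ 2 := by positivity
  have hc1 : Continuous fun t : ℝ => 1 / (1 + t ^ 2) :=
    continuous_const.div (by fun_prop) fun t => (hpos t).ne'
  have hc2 : Continuous fun t : ℝ => t / (1 + t ^ 2) :=
    continuous_id.div (by fun_prop) fun t => (hpos t).ne'
  let c : ℕ → A := fun k => cfc (fun t : ℝ => 1 / (1 + t ^ 2)) (a k)
  let g : ℕ → A := fun k => cfc (fun t : ℝ => t / (1 + t ^ 2)) (a k)
  let d : ℕ → A := fun k => cfc (fun t : ℝ => M * (1 - 1 / (1 + t ^ 2))) (a k)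
  have hcn (k) : ‖c k‖ ≤ 1 := by
    refine norm_cfc_le zero_le_one fun t _ => ?_
    rw [Real.norm_of_nonneg (by positivity), div_le_one (hpos t)]
    nlinarith
  have hgn (k) : ‖g k‖ ≤ 1 := by
    refine norm_cfc_le zero_le_one fun t _ => ?_
    rw [Real.norm_eq_abs, abs_div, abs_of_pos (hpos t), div_le_one (hpos t)]
    nlinarith [sq_abs t, sq_nonneg (|t| - 1)]
  have hg (k) : g k = c k * a k := by
    have h1 := cfc_mul (fun t : ℝ => 1 / (1 + t ^ 2)) (fun t => t) (a k) hc1.continuousOn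
      continuousOn_id
    rw [cfc_id' ℝ (a k) (hsa k)] at h1
    rw [← h1]
    exact cfc_congr fun t _ => by simp only [one_div]; ring
  have hone (k) : c k + g k * a k = 1 := by
    have h1 := cfc_mul (fun t : ℝ => t / (1 + t ^ 2)) (fun t => t) (a k) hc2.continuousOn
      continuousOn_id
    rw [cfc_id' ℝ (a k) (hsa k)] at h1
    rw [← h1, ← cfc_add (a k) (fun t : ℝ => 1 / (1 + t ^ 2)) (fun t => t / (1 + t ^ 2) * t)
      hc1.continuousOn (hc2.mul continuous_id).continuousOn, ← cfc_const_one ℝ (a k) (hsa k)]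
    refine cfc_congr fun t _ => ?_
    have := hpos t
    field_simp
  have hd (k) : d k = M • (1 - c k) := by
    rw [← cfc_const_one ℝ (a k) (hsa k),
      ← cfc_sub (fun _ => 1) (fun t : ℝ => 1 / (1 + t ^ 2)) (a k) continuousOn_const
        hc1.continuousOn, ← cfc_smul M (fun t : ℝ => 1 - 1 / (1 + t ^ 2)) (a k)
        (continuous_const.sub hc1).continuousOn]
    rfl
  refine ⟨d, M, fun k => ?_, fun k => ?_, fun e => ?_⟩
  · refine cfc_nonneg fun t _ => ?_
    have : 1 / (1 + t ^ 2) ≤ 1 := by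
      rw [div_le_one (hpos t)]
      nlinarith
    have := hpos t
    exact mul_nonneg hM.le (by linarith)
  · refine norm_cfc_le hM.le fun t _ => ?_
    have h1 : 1 / (1 + t ^ 2) ≤ 1 := by
      rw [div_le_one (hpos t)]
      nlinarith
    have h2 : 0 ≤ 1 / (1 + t ^ 2) := by positivity
    rw [Real.norm_of_nonneg (mul_nonneg hM.le (by linarith))]
    nlinarith
  -- With `w = (M - x) e`, so that `M e = w + z (z w)`, the resolvent identity expresses `M c e - w`
  -- through `(z - a) (z w)` and `(z - a) w`, and `d = M (1 - c)` gives the limit `M e - w = x e`.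
  · let w : E := (algebraMap ℝ (E →L[ℂ] E) M - x) e
    have hw1 : (M : ℂ) • e = w + x e := by
      simp [w, Algebra.algebraMap_eq_smul_one]
    have hw2 : x e = z (z w) := (congrArg (fun S : E →L[ℂ] E => S e) hz).symm
    have key (k) : π (d k) (V e) = V (x e) - (π (c k) (V (z (z w)) - π (a k) (V (z w)))
        + π (g k) (V (z w) - π (a k) (V w))) := by
      have e1 : π (d k) (V e) = (M : ℂ) • V e - π (c k) ((M : ℂ) • V e) := by
        rw [hd, map_real_smul_of_starAlgHom]
        simp [smul_sub]
      have e2 : V w = π (c k) (V w) + π (g k) (π (a k) (V w)) := by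
        have := congrArg (fun b => π b (V w)) (hone k)
        simpa using this.symm
      have e3 : π (g k) (V (z w)) = π (c k) (π (a k) (V (z w))) := by
        rw [hg]; simp
      rw [e1, ← map_smul, hw1, map_add, map_add, ← hw2, map_sub, map_sub, e3]
      nth_rewrite 1 [e2]
      abel
    simp only [key]
    have t1 : Tendsto (fun k => V (z (z w)) - π (a k) (V (z w))) atTop (𝓝 0) := by
      simpa using (ha (z w)).const_sub (V (z (z w)))
    have t2 : Tendsto (fun k => V (z w) - π (a k) (V w)) atTop (𝓝 0) := by
      simpa using (ha w).const_sub (V (z w))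
    simpa using ((tendsto_zero_of_bounded (π := π) hcn t1).add
      (tendsto_zero_of_bounded (π := π) hgn t2)).const_sub (V (x e))

theorem Approx.cfc_map {f : ℝ → ℝ} (hf : ContinuousOn f (Set.Ici 0)) {a : ℕ → A} {x : E →L[ℂ] E}
    (ha : Approx π V a x) (ha0 : ∀ k, 0 ≤ a k) (hx0 : 0 ≤ x) {C : ℝ} (hC : ∀ k, ‖a k‖ ≤ C) :
    Approx π V (fun k => cfc f (a k)) (cfc f x) := by
  have : CompleteSpace E := FiniteDimensional.complete ℂ E
  intro e
  -- `[0, D]` contains the spectra of `x` and of all the `a k`.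
  let D := max C ‖x‖
  rw [Metric.tendsto_atTop]
  intro ε hε
  let δ := ε / (3 * (‖e‖ + 1))
  have hδ : 0 < δ := by positivity
  have hδe : δ * ‖e‖ ≤ ε / 3 := by
    have : δ * (‖e‖ + 1) = ε / 3 := by simp only [δ]; field_simp
    nlinarith
  obtain ⟨p, hp⟩ := exists_polynomial_near_of_continuousOn 0 D f
    (hf.mono Set.Icc_subset_Ici_self) δ hδ
  have hclose {B : Type} [CStarAlgebra B] [PartialOrder B] [StarOrderedRing B] {b : B}
      (hb : 0 ≤ b) (hbD : ‖b‖ ≤ D) : ‖cfc f b - Polynomial.aeval b p‖ ≤ δ := by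
    have hs : ∀ t ∈ spectrum ℝ b, t ∈ Set.Icc 0 D := fun t ht =>
      Set.Icc_subset_Icc_right hbD (mem_Icc_of_mem_spectrum hb ht)
    rw [← cfc_polynomial p b, ← cfc_sub f p.eval b (hf.mono fun t ht => (hs t ht).1)]
    refine norm_cfc_le hδ.le fun t ht => ?_
    rw [Real.norm_eq_abs, abs_sub_comm]
    exact (hp t (hs t ht)).le
  obtain ⟨N, hN⟩ := Metric.tendsto_atTop.1 (ha.aeval hC p e) (ε / 3) (by positivity)
  refine ⟨N, fun k hk => ?_⟩
  have h1 : dist (π (cfc f (a k)) (V e)) (π (Polynomial.aeval (a k) p) (V e)) ≤ ε / 3 := by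
    rw [dist_eq_norm, ← sub_apply, ← map_sub]
    refine (ContinuousLinearMap.le_opNorm _ _).trans (le_trans ?_ hδe)
    rw [V.norm_map]
    gcongr
    exact (NonUnitalStarAlgHom.norm_apply_le π _).trans
      (hclose (ha0 k) ((hC k).trans (le_max_left _ _)))
  have h2 : dist (V (Polynomial.aeval x p e)) (V (cfc f x e)) ≤ ε / 3 := by
    rw [V.dist_map, dist_comm, dist_eq_norm, ← sub_apply]
    refine (ContinuousLinearMap.le_opNorm _ _).trans (le_trans ?_ hδe)
    gcongr
    exact hclose hx0 (le_max_right _ _)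
  have h3 := hN k hk
  have h4 := dist_triangle4 (π (cfc f (a k)) (V e)) (π (Polynomial.aeval (a k) p) (V e))
    (V (Polynomial.aeval x p e)) (V (cfc f x e))
  linarith

/-- If `H` contains an isometric copy of the finite-dimensional space `E`, then continuous
`A`-monotone functions are monotone on the operators of `E`. -/
theorem IsIrreducibleRep.monotone_of_isometry (hπ : IsIrreducibleRep π) [CompleteSpace E]
    (V : E →ₗᵢ[ℂ] H)
    {f : ℝ → ℝ} (hf : ContinuousOn f (Set.Ici 0)) (hA : AMonotone A f) :
    AMonotone (E →L[ℂ] E) f := by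
  intro x y hx hy hxs hys hxy
  have hx0 : 0 ≤ x := (StarOrderedRing.nonneg_iff_spectrum_nonneg x).2 fun t ht => hxs ht
  have hy0 : 0 ≤ y := hx0.trans hxy
  obtain ⟨a, C, ha0, haC, ha⟩ := hπ.exists_approx_nonneg V hx0
  obtain ⟨d, D, hd0, hdD, hd⟩ := hπ.exists_approx_nonneg V (sub_nonneg.2 hxy)
  have hb : Approx π V (a + d) y := by simpa using ha.add hd
  have hb0 (k) : 0 ≤ (a + d) k := add_nonneg (ha0 k) (hd0 k)
  have hbC (k) : ‖(a + d) k‖ ≤ C + D := (norm_add_le _ _).trans (add_le_add (haC k) (hdD k))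
  have hle (k) : cfc f (a k) ≤ cfc f ((a + d) k) :=
    hA _ _ (.of_nonneg (ha0 k)) (.of_nonneg (hb0 k))
      (fun t ht => spectrum_nonneg_of_nonneg (ha0 k) ht)
      (fun t ht => spectrum_nonneg_of_nonneg (hb0 k) ht) (le_add_of_nonneg_right (hd0 k))
  have hfa := ha.cfc_map hf ha0 hx0 haC
  have hfb := hb.cfc_map hf hb0 hy0 hbC
  rw [ContinuousLinearMap.le_def, ContinuousLinearMap.isPositive_def']
  refine ⟨(cfc_predicate f y).sub (cfc_predicate f x), fun e => ?_⟩
  have hlim : Tendsto (fun k => RCLike.re ⟪(π (cfc f ((a + d) k)) - π (cfc f (a k))) (V e), V e⟫_ℂ)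
      atTop (𝓝 (RCLike.re ⟪(cfc f y - cfc f x) e, e⟫_ℂ)) := by
    have := ((hfb e).sub (hfa e)).inner (tendsto_const_nhds (x := V e)) (𝕜 := ℂ)
    rw [← map_sub, V.inner_map_map] at this
    exact (RCLike.continuous_re.tendsto _).comp this
  refine ge_of_tendsto' hlim fun k => ?_
  have h1 : π (cfc f (a k)) ≤ π (cfc f ((a + d) k)) := OrderHomClass.mono π (hle k)
  rw [ContinuousLinearMap.le_def] at h1
  exact h1.re_inner_nonneg_left _

end Approx

/-- Assuming the gap theorem `P_{n+1} ⊊ P_n`, if `P_n ⊆ P_A` then every irreducible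
representation of `A` has dimension at most `n`. -/
theorem stmt11
    (gap : ∀ k : ℕ, 0 < k → ∃ f : ℝ → ℝ, ContinuousOn f (Set.Ici (0:ℝ)) ∧
      MatrixMonotone k f ∧ ¬ MatrixMonotone (k + 1) f)
    (A : Type) [CStarAlgebra A] [PartialOrder A] [StarOrderedRing A] (n : ℕ) (hn : 0 < n)
    (hPn : ∀ f : ℝ → ℝ, ContinuousOn f (Set.Ici (0:ℝ)) → MatrixMonotone n f → AMonotone A f) :
    ∀ (H : Type) [NormedAddCommGroup H] [InnerProductSpace ℂ H] [CompleteSpace H]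
      (π : A →⋆ₐ[ℂ] (H →L[ℂ] H)), IsIrreducibleRep π → Module.rank ℂ H ≤ n := by 
  intro H _ _ _ π hπ
  by_contra hlt
  have hle : ((n + 1 : ℕ) : Cardinal) ≤ Module.rank ℂ H := by
    rw [Nat.cast_succ, ← Cardinal.succ_natCast]
    exact Order.succ_le_of_lt (not_le.1 hlt)
  obtain ⟨s, hs, hli⟩ := le_rank_iff_exists_linearIndependent_finset.1 hle
  let v : Fin (n + 1) → H := fun i => (s.equivFinOfCardEq hs).symm i
  have hv : LinearIndependent ℂ v := hli.comp _ (s.equivFinOfCardEq hs).symm.injective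
  -- Gram–Schmidt turns `v` into an isometric embedding of `ℂ^(n+1)`.
  have ho := InnerProductSpace.gramSchmidtNormed_orthonormal hv
  let L : EuclideanSpace ℂ (Fin (n + 1)) →ₗ[ℂ] H :=
    (EuclideanSpace.basisFun (Fin (n + 1)) ℂ).toBasis.constr ℂ
      (InnerProductSpace.gramSchmidtNormed ℂ v)
  have hL : L ∘ (EuclideanSpace.basisFun (Fin (n + 1)) ℂ).toBasis
      = InnerProductSpace.gramSchmidtNormed ℂ v := by
    ext i
    exact Module.Basis.constr_basis _ _ _ _
  let V : EuclideanSpace ℂ (Fin (n + 1)) →ₗᵢ[ℂ] H :=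
    L.isometryOfOrthonormal (v := (EuclideanSpace.basisFun (Fin (n + 1)) ℂ).toBasis)
      (by simp)
      (by rw [hL]; exact ho)
  obtain ⟨f, hf, hfn, hfn1⟩ := gap n hn
  exact hfn1 (hπ.monotone_of_isometry V hf (hPn f hf hfn))
end
end
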